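/- arXiv:1310.8296 — 2 statements merged into one kernel-verified Lean document; each statement's English description precedes it below -/
import Mathlib

section
/- (Savings plan reduced-equation solution verification.) Let σ > 0, r_d, r_f ∈ ℝ, T ∈ ℝ, A ∈ ℝ, K > 0. Define, for z > 0 and t < T, U(z, t) = A·e^{−r_f(T−t)} + e^{r_dT}·[z·e^{−r_d(T−t)}·N(d₁) − K·e^{−r_f(T−t)}·N(d₂)], where d₁ = (ln(z/K) + (r_f − r_d + σ²/2)(T−t)) / (σ√(T−t)) and d₂ = d₁ − σ√(T−t). Then U satisfies ∂U/∂t + (1/2)σ² z² ∂²U/∂z² + (r_f − r_d) z ∂U/∂z − r_f U = 0 at every point (z, t) with z > 0 and t < T. -/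
/-- The standard normal cumulative distribution function
`N(x) = (2π)^{-1/2} ∫_{-∞}^{x} e^{-u²/2} du`. -/
noncomputable def stdNormalCDF (x : ℝ) : ℝ :=
  (Real.sqrt (2 * Real.pi))⁻¹ * ∫ u in Set.Iic x, Real.exp (-u ^ 2 / 2)

/-!
The savings plan is a portfolio of `A` bonds and `e^{r_d T}` European calls under interest rate
`r_f` and dividend yield `r_d`; the equation is linear, so the two may be treated separately.
The call price has the form `a N(d₁) - b N(d₂)` with `a = z e^{-r_d (T - t)}`,
`b = K e^{-r_f (T - t)}` and `a N'(d₁) = b N'(d₂)`. Differentiating along any curve, the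
contribution of `d₁'` therefore cancels, and only that of the spread `d₁ - d₂ = σ √(T - t)`
survives. The spread is constant in `z`, and its decay in `t` balances the convexity term
`½ σ² z² ∂²/∂z²`.
-/

section StandardNormal

open MeasureTheory ProbabilityTheory Set Filter Topology

theorem hasDerivAt_integral_Iic {E : Type*} [NormedAddCommGroup E] [NormedSpace ℝ E]
    [CompleteSpace E] {f : ℝ → E} {x b : ℝ} (hf : IntegrableOn f (Iic b)) (hxb : x < b)
    (hx : ContinuousAt f x) :
    HasDerivAt (fun y => ∫ u in Iic y, f u) (f x) x := by
  have h_int : ∀ y ≤ b, IntegrableOn f (Iic y) := fun y hy => hf.mono_set (Iic_subset_Iic.2 hy)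
  have h_split : (fun y => ∫ u in Iic y, f u) =ᶠ[𝓝 x]
      fun y => (∫ u in x..y, f u) + ∫ u in Iic x, f u := by
    filter_upwards [Iio_mem_nhds hxb] with y hy
    rw [← intervalIntegral.integral_Iic_sub_Iic (h_int x hxb.le) (h_int y (le_of_lt hy)),
      sub_add_cancel]
  have h_meas : StronglyMeasurableAtFilter f (𝓝 x) :=
    ⟨Iic b, Iic_mem_nhds hxb, hf.aestronglyMeasurable⟩
  exact ((intervalIntegral.integral_hasDerivAt_right IntervalIntegrable.refl h_meas
    hx).add_const _).congr_of_eventuallyEq h_split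

theorem continuous_gaussianPDFReal (μ : ℝ) (v : NNReal) : Continuous (gaussianPDFReal μ v) := by
  rw [gaussianPDFReal_def]
  fun_prop

theorem gaussianPDFReal_sub_eq_exp_mul (μ : ℝ) (v : NNReal) (x y : ℝ) :
    gaussianPDFReal μ v (x - y) =
      Real.exp ((2 * (x - μ) * y - y ^ 2) / (2 * v)) * gaussianPDFReal μ v x := by
  rw [gaussianPDFReal, gaussianPDFReal, mul_left_comm, ← Real.exp_add]
  congr 2
  ring

theorem stdNormalCDF_eq_integral_gaussianPDFReal (x : ℝ) :
    stdNormalCDF x = ∫ u in Iic x, gaussianPDFReal 0 1 u := by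
  simp only [stdNormalCDF, gaussianPDFReal_def, integral_const_mul, NNReal.coe_one, mul_one,
    sub_zero]

theorem hasDerivAt_stdNormalCDF (x : ℝ) :
    HasDerivAt stdNormalCDF (gaussianPDFReal 0 1 x) x := by
  rw [funext stdNormalCDF_eq_integral_gaussianPDFReal]
  exact hasDerivAt_integral_Iic (integrable_gaussianPDFReal 0 1).integrableOn (lt_add_one x)
    (continuous_gaussianPDFReal 0 1).continuousAt

theorem hasDerivAt_mul_stdNormalCDF_sub_mul_stdNormalCDF {a b d v : ℝ → ℝ} {a' b' d' v' x : ℝ}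
    (ha : HasDerivAt a a' x) (hb : HasDerivAt b b' x) (hd : HasDerivAt d d' x)
    (hv : HasDerivAt v v' x)
    (h_density : b x * gaussianPDFReal 0 1 (d x - v x) = a x * gaussianPDFReal 0 1 (d x)) :
    HasDerivAt (fun y => a y * stdNormalCDF (d y) - b y * stdNormalCDF (d y - v y))
      (a' * stdNormalCDF (d x) - b' * stdNormalCDF (d x - v x)
        + a x * gaussianPDFReal 0 1 (d x) * v') x := by
  have hN₁ : HasDerivAt (fun y => stdNormalCDF (d y)) (gaussianPDFReal 0 1 (d x) * d') x :=
    (hasDerivAt_stdNormalCDF _).comp x hd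
  have hN₂ : HasDerivAt (fun y => stdNormalCDF (d y - v y))
      (gaussianPDFReal 0 1 (d x - v x) * (d' - v')) x :=
    (hasDerivAt_stdNormalCDF _).comp x (hd.fun_sub hv)
  refine ((ha.mul hN₁).fun_sub (hb.mul hN₂)).congr_deriv ?_
  linear_combination (v' - d') * h_density

end StandardNormal

section BlackScholesEquation

open Filter Topology

/-- `V` (a function of the spot price `z` and the time `t`) solves at `(z, t)` the Black–Scholes
equation with volatility `σ`, interest rate `r` and dividend yield `q`. The derivatives entering the
equation are required to exist. -/
def SolvesBlackScholesAt (σ r q : ℝ) (V : ℝ → ℝ → ℝ) (z t : ℝ) : Prop :=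
  ∃ (Vt Vzz : ℝ) (Vz : ℝ → ℝ), HasDerivAt (fun s => V z s) Vt t ∧
    (∀ᶠ w in 𝓝 z, HasDerivAt (fun w => V w t) (Vz w) w) ∧ HasDerivAt Vz Vzz z ∧
    Vt + (1 / 2) * σ ^ 2 * z ^ 2 * Vzz + (r - q) * z * Vz z - r * V z t = 0

namespace SolvesBlackScholesAt

variable {σ r q z t : ℝ} {V W : ℝ → ℝ → ℝ}

theorem add (hV : SolvesBlackScholesAt σ r q V z t) (hW : SolvesBlackScholesAt σ r q W z t) :
    SolvesBlackScholesAt σ r q (fun w s => V w s + W w s) z t := by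
  obtain ⟨Vt, Vzz, Vz, hVt, hVz, hVzz, hV_eq⟩ := hV
  obtain ⟨Wt, Wzz, Wz, hWt, hWz, hWzz, hW_eq⟩ := hW
  refine ⟨Vt + Wt, Vzz + Wzz, fun w => Vz w + Wz w, hVt.fun_add hWt, ?_, hVzz.fun_add hWzz, ?_⟩
  · filter_upwards [hVz, hWz] with w hVw hWw using hVw.fun_add hWw
  · linear_combination hV_eq + hW_eq

theorem const_mul (c : ℝ) (hV : SolvesBlackScholesAt σ r q V z t) :
    SolvesBlackScholesAt σ r q (fun w s => c * V w s) z t := by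
  obtain ⟨Vt, Vzz, Vz, hVt, hVz, hVzz, hV_eq⟩ := hV
  refine ⟨c * Vt, c * Vzz, fun w => c * Vz w, hVt.const_mul c, ?_, hVzz.const_mul c, ?_⟩
  · filter_upwards [hVz] with w hVw using hVw.const_mul c
  · linear_combination c * hV_eq

theorem congr (hV : SolvesBlackScholesAt σ r q V z t) (h_time : ∀ᶠ s in 𝓝 t, W z s = V z s)
    (h_spot : ∀ᶠ w in 𝓝 z, W w t = V w t) : SolvesBlackScholesAt σ r q W z t := by
  obtain ⟨Vt, Vzz, Vz, hVt, hVz, hVzz, hV_eq⟩ := hV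
  refine ⟨Vt, Vzz, Vz, hVt.congr_of_eventuallyEq h_time, ?_, hVzz, ?_⟩
  · filter_upwards [hVz, h_spot.eventually_nhds] with w hVw hw using hVw.congr_of_eventuallyEq hw
  · rwa [h_spot.self_of_nhds]

theorem deriv_eq_zero (hV : SolvesBlackScholesAt σ r q V z t) :
    deriv (fun s => V z s) t + (1 / 2) * σ ^ 2 * z ^ 2 * deriv (deriv (fun w => V w t)) z
      + (r - q) * z * deriv (fun w => V w t) z - r * V z t = 0 := by
  obtain ⟨Vt, Vzz, Vz, hVt, hVz, hVzz, hV_eq⟩ := hV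
  have h_deriv : deriv (fun w => V w t) =ᶠ[𝓝 z] Vz := hVz.mono fun w hw => hw.deriv
  rwa [hVt.deriv, h_deriv.deriv_eq, hVzz.deriv, h_deriv.eq_of_nhds]

end SolvesBlackScholesAt

theorem solvesBlackScholesAt_exp_neg_mul_sub (σ r q T z t : ℝ) :
    SolvesBlackScholesAt σ r q (fun _ s => Real.exp (-(r * (T - s)))) z t := by
  have h_time : HasDerivAt (fun s => Real.exp (-(r * (T - s))))
      (r * Real.exp (-(r * (T - t)))) t := by
    refine ((((hasDerivAt_id' t).const_sub T).const_mul r).fun_neg.exp).congr_deriv ?_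
    ring
  exact ⟨_, 0, fun _ => 0, h_time, .of_forall fun w => hasDerivAt_const w _, hasDerivAt_const z _,
    by ring⟩

end BlackScholesEquation

section EuropeanCall

open ProbabilityTheory Filter Topology

/-- The quantity `d₁` of the Black–Scholes formula, for volatility `σ`, interest rate `r`, dividend
yield `q`, strike `K`, spot price `z` and time to maturity `τ`. The companion quantity `d₂` is
always written `d₁ - σ √τ`. -/
noncomputable def callD₁ (σ r q K z τ : ℝ) : ℝ :=
  (Real.log (z / K) + (r - q + σ ^ 2 / 2) * τ) / (σ * √τ)

/-- The Black–Scholes price of a European call on an asset with continuous dividend yield `q`, in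
terms of the spot price `z` and the time to maturity `τ`. -/
noncomputable def callPrice (σ r q K z τ : ℝ) : ℝ :=
  z * Real.exp (-(q * τ)) * stdNormalCDF (callD₁ σ r q K z τ)
    - K * Real.exp (-(r * τ)) * stdNormalCDF (callD₁ σ r q K z τ - σ * √τ)

variable {σ K z τ : ℝ} (r q : ℝ)

theorem strike_mul_gaussianPDFReal_eq_spot_mul_gaussianPDFReal (hσ : σ ≠ 0) (hK : 0 < K)
    (hz : 0 < z) (hτ : 0 < τ) :
    K * Real.exp (-(r * τ)) * gaussianPDFReal 0 1 (callD₁ σ r q K z τ - σ * √τ) =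
      z * Real.exp (-(q * τ)) * gaussianPDFReal 0 1 (callD₁ σ r q K z τ) := by
  set d := callD₁ σ r q K z τ with hd
  have h_moneyness : d * (σ * √τ) - (σ * √τ) ^ 2 / 2 = Real.log (z / K) + (r - q) * τ := by
    have h_vol : σ * √τ ≠ 0 := mul_ne_zero hσ (Real.sqrt_pos.2 hτ).ne'
    rw [hd, callD₁, div_mul_cancel₀ _ h_vol, mul_pow, Real.sq_sqrt hτ.le]
    ring
  have h_shift : gaussianPDFReal 0 1 (d - σ * √τ) =
      z / K * Real.exp ((r - q) * τ) * gaussianPDFReal 0 1 d := by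
    rw [gaussianPDFReal_sub_eq_exp_mul, ← Real.exp_log (div_pos hz hK), ← Real.exp_add,
      ← h_moneyness, NNReal.coe_one]
    ring_nf
  have h_discount : Real.exp (-(r * τ)) * Real.exp ((r - q) * τ) = Real.exp (-(q * τ)) := by
    rw [← Real.exp_add]
    ring_nf
  rw [h_shift, ← h_discount]
  field_simp

theorem hasDerivAt_callD₁_spot (σ τ : ℝ) (hK : K ≠ 0) (hz : z ≠ 0) :
    HasDerivAt (fun w => callD₁ σ r q K w τ) (z * (σ * √τ))⁻¹ z := by
  refine (((((hasDerivAt_id' z).div_const K).log (div_ne_zero hz hK)).add_const _).div_const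
    _).congr_deriv ?_
  field_simp

theorem differentiableAt_callD₁_maturity (K z : ℝ) (hσ : σ ≠ 0) (hτ : 0 < τ) :
    DifferentiableAt ℝ (fun s => callD₁ σ r q K z s) τ :=
  .fun_div (by fun_prop) ((differentiableAt_id.sqrt hτ.ne').const_mul σ)
    (mul_ne_zero hσ (Real.sqrt_pos.2 hτ).ne')

theorem hasDerivAt_callPrice_spot (hσ : σ ≠ 0) (hK : 0 < K) (hz : 0 < z) (hτ : 0 < τ) :
    HasDerivAt (fun w => callPrice σ r q K w τ)
      (Real.exp (-(q * τ)) * stdNormalCDF (callD₁ σ r q K z τ)) z := by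
  refine (hasDerivAt_mul_stdNormalCDF_sub_mul_stdNormalCDF
    ((hasDerivAt_id' z).mul_const (Real.exp (-(q * τ)))) (hasDerivAt_const z _)
    (hasDerivAt_callD₁_spot r q σ τ hK.ne' hz.ne') (hasDerivAt_const z (σ * √τ))
    (strike_mul_gaussianPDFReal_eq_spot_mul_gaussianPDFReal r q hσ hK hz hτ)).congr_deriv ?_
  ring

theorem hasDerivAt_exp_mul_stdNormalCDF_callD₁_spot (σ τ : ℝ) (hK : K ≠ 0) (hz : z ≠ 0) :
    HasDerivAt (fun w => Real.exp (-(q * τ)) * stdNormalCDF (callD₁ σ r q K w τ))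
      (Real.exp (-(q * τ)) * (gaussianPDFReal 0 1 (callD₁ σ r q K z τ) * (z * (σ * √τ))⁻¹)) z :=
  ((hasDerivAt_stdNormalCDF _).comp z (hasDerivAt_callD₁_spot r q σ τ hK hz)).const_mul _

theorem hasDerivAt_callPrice_maturity (hσ : σ ≠ 0) (hK : 0 < K) (hz : 0 < z) (hτ : 0 < τ) :
    HasDerivAt (fun s => callPrice σ r q K z s)
      (-(q * z * Real.exp (-(q * τ)) * stdNormalCDF (callD₁ σ r q K z τ))
        + r * K * Real.exp (-(r * τ)) * stdNormalCDF (callD₁ σ r q K z τ - σ * √τ)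
        + z * Real.exp (-(q * τ)) * gaussianPDFReal 0 1 (callD₁ σ r q K z τ) * (σ / (2 * √τ)))
      τ := by
  have h_discount : ∀ c ρ : ℝ, HasDerivAt (fun s => c * Real.exp (-(ρ * s)))
      (c * (Real.exp (-(ρ * τ)) * -(ρ * 1))) τ := fun c ρ =>
    (((hasDerivAt_id' τ).const_mul ρ).fun_neg.exp).const_mul c
  have h_vol : HasDerivAt (fun s => σ * √s) (σ * (1 / (2 * √τ))) τ :=
    (Real.hasDerivAt_sqrt hτ.ne').const_mul σ
  refine (hasDerivAt_mul_stdNormalCDF_sub_mul_stdNormalCDF (h_discount z q) (h_discount K r)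
    (differentiableAt_callD₁_maturity r q K z hσ hτ).hasDerivAt h_vol
    (strike_mul_gaussianPDFReal_eq_spot_mul_gaussianPDFReal r q hσ hK hz hτ)).congr_deriv ?_
  ring

theorem solvesBlackScholesAt_callPrice {T t : ℝ} (hσ : σ ≠ 0) (hK : 0 < K) (hz : 0 < z)
    (ht : t < T) : SolvesBlackScholesAt σ r q (fun w s => callPrice σ r q K w (T - s)) z t := by
  have hτ : 0 < T - t := sub_pos.2 ht
  refine ⟨_, _, _, (hasDerivAt_callPrice_maturity r q hσ hK hz hτ).comp_const_sub T t,
    (eventually_gt_nhds hz).mono fun w hw => hasDerivAt_callPrice_spot r q hσ hK hw hτ,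
    hasDerivAt_exp_mul_stdNormalCDF_callD₁_spot r q σ (T - t) hK.ne' hz.ne', ?_⟩
  have h_gamma : σ ^ 2 * z ^ 2 * (z * (σ * √(T - t)))⁻¹ = z * (σ / √(T - t)) := by
    field_simp
  simp only [callPrice]
  linear_combination (Real.exp (-(q * (T - t)))
    * gaussianPDFReal 0 1 (callD₁ σ r q K z (T - t)) / 2) * h_gamma

end EuropeanCall

theorem savings_plan_reduced_solution_general {σ r q T A B K : ℝ} (hσ : σ ≠ 0) (hK : 0 < K)
    {U : ℝ → ℝ → ℝ}
    (hU : ∀ z t : ℝ, 0 < z → t < T →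
      U z t = A * Real.exp (-(r * (T - t))) + B * callPrice σ r q K z (T - t))
    {z t : ℝ} (hz : 0 < z) (ht : t < T) : SolvesBlackScholesAt σ r q U z t :=
  (((solvesBlackScholesAt_exp_neg_mul_sub σ r q T z t).const_mul A).add
    ((solvesBlackScholesAt_callPrice r q hσ hK hz ht).const_mul B)).congr
    ((eventually_lt_nhds ht).mono fun s hs => hU z s hz hs)
    ((eventually_gt_nhds hz).mono fun w hw => hU w t hw ht)

/-- Savings plan reduced-equation solution verification. -/
theorem savings_plan_reduced_solution (σ rd rf T A K : ℝ)
    (hσ : 0 < σ) (hK : 0 < K)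
    (U : ℝ → ℝ → ℝ)
    (hU : ∀ z t : ℝ, 0 < z → t < T →
      U z t = A * Real.exp (-(rf * (T - t)))
          + Real.exp (rd * T)
              * (z * Real.exp (-(rd * (T - t))) * stdNormalCDF
                  ((Real.log (z / K) + (rf - rd + σ ^ 2 / 2) * (T - t))
                    / (σ * Real.sqrt (T - t)))
                - K * Real.exp (-(rf * (T - t))) * stdNormalCDF
                  ((Real.log (z / K) + (rf - rd + σ ^ 2 / 2) * (T - t))
                      / (σ * Real.sqrt (T - t)) - σ * Real.sqrt (T - t)))) :
    ∀ z t : ℝ, 0 < z → t < T →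
      deriv (fun τ => U z τ) t
          + (1 / 2) * σ ^ 2 * z ^ 2 * deriv (deriv (fun w => U w t)) z
          + (rf - rd) * z * deriv (fun w => U w t) z
          - rf * U z t = 0 := fun _ _ hz ht =>
  (savings_plan_reduced_solution_general (B := Real.exp (rd * T)) hσ.ne' hK hU hz ht).deriv_eq_zero
end

section
/- (Convertible bond: dimension reduction for arbitrary short-rate function.) Let σ_S > 0, ρ ∈ ℝ, T₀ ∈ ℝ, let Σ_p : ℝ → ℝ be continuous, and let r : ℝ × (0,∞) → ℝ be an arbitrary function. Let U : (0,∞) × ℝ → ℝ be twice continuously differentiable and define V(S, p, t) = p · U(S/p, t) on (0,∞)² × ℝ. Then: (i) V satisfies ∂V/∂t + (1/2)[σ_S²S² ∂²V/∂S² − 2ρσ_SΣ_p(t) S p ∂²V/∂S∂p + Σ_p(t)²p² ∂²V/∂p²] + r(t,p)·S ∂V/∂S + r(t,p)·p ∂V/∂p − r(t,p)·V = 0 at every point of (0,∞)² × ℝ if and only if U satisfies ∂U/∂t + (1/2)(σ_S² + 2ρσ_SΣ_p(t) + Σ_p(t)²) z² ∂²U/∂z² = 0 at every point of (0,∞) ×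 ℝ; and (ii) V(S, p, T₀) = max(S, p) for all S, p > 0 if and only if U(z, T₀) = 1 + max(z − 1, 0) for all z > 0. -/
/-!
The substitution `V = p · U(S/p, t)` makes `V` homogeneous of degree one in `(S, p)`. By Euler's
identity `S V_S + p V_p = V`, so the three short-rate terms cancel whatever `r` is. Each of
`S² V_SS`, `-S p V_Sp` and `p² V_pp` equals `p z² U_zz` at `z = S/p`, so the rest of the equation is
`p` times the reduced equation at `z`; the terminal conditions are likewise matched by dividing by
`p`.
-/

open Filter Set Topology

/-- The perspective of `f`, the degree-one homogeneous function `(s, q) ↦ q f(s/q)`. It turns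
a price `f` quoted in units of the second asset into a price in currency. -/
def perspective {K : Type*} [Field K] (f : K → K) (s q : K) : K :=
  q * f (s / q)

section OrderedField

variable {K : Type*} [Field K] [LinearOrder K] [IsStrictOrderedRing K]

theorem forall_pos_perspective_eq_iff {f g : K → K} :
    (∀ s q, 0 < s → 0 < q → perspective f s q = perspective g s q) ↔ ∀ z, 0 < z → f z = g z := by
  refine ⟨fun h z hz => ?_, fun h s q hs hq => congrArg (q * ·) (h _ (div_pos hs hq))⟩
  simpa only [perspective, one_mul, div_one] using h z 1 hz one_pos

theorem forall_pos_perspective_eq_zero_iff {f : K → K} :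
    (∀ s q, 0 < s → 0 < q → perspective f s q = 0) ↔ ∀ z, 0 < z → f z = 0 := by
  simpa only [perspective, mul_zero] using forall_pos_perspective_eq_iff (f := f) (g := fun _ => 0)

theorem perspective_one_add_max_sub_one {q : K} (hq : 0 < q) (s : K) :
    perspective (fun z => 1 + max (z - 1) 0) s q = max s q := by
  rw [perspective, ← max_add_add_left, add_sub_cancel, add_zero, mul_max_of_nonneg _ _ hq.le,
    mul_div_cancel₀ _ hq.ne', mul_one]

end OrderedField

section Derivatives

variable {𝕜 : Type*} [NontriviallyNormedField 𝕜] {f : 𝕜 → 𝕜} {s q : 𝕜}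

theorem hasDerivAt_comp_div_const {f' : 𝕜} (hf : HasDerivAt f f' (s / q)) :
    HasDerivAt (fun x => f (x / q)) (f' / q) s :=
  (hf.comp s ((hasDerivAt_id s).div_const q)).congr_deriv (mul_one_div f' q)

theorem hasDerivAt_comp_const_div {f' : 𝕜} (hq : q ≠ 0) (hf : HasDerivAt f f' (s / q)) :
    HasDerivAt (fun y => f (s / y)) (-(s / q * f' / q)) q := by
  have hdiv : HasDerivAt (fun y => s / y) (-(s / q ^ 2)) q := by
    simpa only [div_eq_mul_inv, mul_neg, one_mul, neg_mul] using (hasDerivAt_inv hq).const_mul s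
  exact (hf.comp q hdiv).congr_deriv (by field_simp)

theorem hasDerivAt_perspective_left {f' : 𝕜} (hq : q ≠ 0) (hf : HasDerivAt f f' (s / q)) :
    HasDerivAt (fun x => perspective f x q) f' s :=
  ((hasDerivAt_comp_div_const hf).const_mul q).congr_deriv (mul_div_cancel₀ f' hq)

theorem hasDerivAt_perspective_right {f' : 𝕜} (hq : q ≠ 0) (hf : HasDerivAt f f' (s / q)) :
    HasDerivAt (fun y => perspective f s y) (f (s / q) - s / q * f') q :=
  ((hasDerivAt_id q).mul (hasDerivAt_comp_const_div hq hf)).congr_deriv <| by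
    simp only [id]
    field_simp
    ring

theorem euler_identity_perspective (hq : q ≠ 0) (hf : DifferentiableAt 𝕜 f (s / q)) :
    s * deriv (fun x => perspective f x q) s + q * deriv (fun y => perspective f s y) q =
      perspective f s q := by
  rw [(hasDerivAt_perspective_left hq hf.hasDerivAt).deriv,
    (hasDerivAt_perspective_right hq hf.hasDerivAt).deriv, perspective]
  field_simp
  ring

theorem hasDerivAt_sub_self_mul_deriv {z : 𝕜} (hf : DifferentiableAt 𝕜 f z)
    (hf' : DifferentiableAt 𝕜 (deriv f) z) :
    HasDerivAt (fun w => f w - w * deriv f w) (-(z * deriv (deriv f) z)) z :=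
  (hf.hasDerivAt.sub ((hasDerivAt_id z).mul hf'.hasDerivAt)).congr_deriv (by simp only [id]; ring)

theorem deriv_deriv_perspective_left (hq : q ≠ 0)
    (hf : ∀ᶠ z in 𝓝 (s / q), DifferentiableAt 𝕜 f z) (hf' : DifferentiableAt 𝕜 (deriv f) (s / q)) :
    deriv (deriv fun x => perspective f x q) s = deriv (deriv f) (s / q) / q := by
  have hcont : ContinuousAt (fun x => x / q) s := continuousAt_id.div_const q
  have hfirst : deriv (fun x => perspective f x q) =ᶠ[𝓝 s] fun x => deriv f (x / q) :=
    (hcont.eventually hf).mono fun x hx => (hasDerivAt_perspective_left hq hx.hasDerivAt).deriv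
  rw [hfirst.deriv_eq, (hasDerivAt_comp_div_const hf'.hasDerivAt).deriv]

theorem deriv_deriv_perspective_mixed (hq : q ≠ 0)
    (hf : ∀ᶠ z in 𝓝 (s / q), DifferentiableAt 𝕜 f z) (hf' : DifferentiableAt 𝕜 (deriv f) (s / q)) :
    deriv (fun x => deriv (fun y => perspective f x y) q) s =
      -(s / q * deriv (deriv f) (s / q)) / q := by
  have hcont : ContinuousAt (fun x => x / q) s := continuousAt_id.div_const q
  have hfirst : (fun x => deriv (fun y => perspective f x y) q) =ᶠ[𝓝 s]
      fun x => f (x / q) - x / q * deriv f (x / q) :=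
    (hcont.eventually hf).mono fun x hx => (hasDerivAt_perspective_right hq hx.hasDerivAt).deriv
  rw [hfirst.deriv_eq]
  exact (hasDerivAt_comp_div_const (hasDerivAt_sub_self_mul_deriv hf.self_of_nhds hf')).deriv

theorem deriv_deriv_perspective_right (hq : q ≠ 0)
    (hf : ∀ᶠ z in 𝓝 (s / q), DifferentiableAt 𝕜 f z) (hf' : DifferentiableAt 𝕜 (deriv f) (s / q)) :
    deriv (deriv fun y => perspective f s y) q = (s / q) ^ 2 * deriv (deriv f) (s / q) / q := by
  have hcont : ContinuousAt (fun y => s / y) q := continuousAt_const.div continuousAt_id hq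
  have hfirst : deriv (fun y => perspective f s y) =ᶠ[𝓝 q]
      fun y => f (s / y) - s / y * deriv f (s / y) := by
    filter_upwards [hcont.eventually hf, eventually_ne_nhds hq] with y hy hy0
    exact (hasDerivAt_perspective_right hy0 hy.hasDerivAt).deriv
  rw [hfirst.deriv_eq,
    (hasDerivAt_comp_const_div hq (hasDerivAt_sub_self_mul_deriv hf.self_of_nhds hf')).deriv]
  ring

end Derivatives

section Slices

variable {𝕜 E F G : Type*} [NontriviallyNormedField 𝕜]
  [NormedAddCommGroup E] [NormedSpace 𝕜 E] [NormedAddCommGroup F] [NormedSpace 𝕜 F]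
  [NormedAddCommGroup G] [NormedSpace 𝕜 G]
  {n : WithTop ℕ∞} {u : E → F → G} {A : Set (E × F)}

theorem contDiffOn_slice_left (hu : ContDiffOn 𝕜 n (fun q : E × F => u q.1 q.2) A) (y : F) :
    ContDiffOn 𝕜 n (fun x => u x y) {x | (x, y) ∈ A} :=
  hu.comp (contDiff_prodMk_left y).contDiffOn fun _ hx => hx

theorem contDiffOn_slice_right (hu : ContDiffOn 𝕜 n (fun q : E × F => u q.1 q.2) A) (x : E) :
    ContDiffOn 𝕜 n (u x) {y | (x, y) ∈ A} :=
  hu.comp (contDiff_prodMk_right x).contDiffOn fun _ hy => hy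

end Slices

theorem differentiable_slices_of_contDiffOn {U : ℝ → ℝ → ℝ}
    (hU : ContDiffOn ℝ 2 (fun q : ℝ × ℝ => U q.1 q.2) {q : ℝ × ℝ | 0 < q.1}) :
    (∀ t, DifferentiableOn ℝ (fun w => U w t) (Ioi 0)) ∧
      (∀ t, DifferentiableOn ℝ (deriv fun w => U w t) (Ioi 0)) ∧
      ∀ z, 0 < z → Differentiable ℝ (U z) := by
  have hUz (t : ℝ) : ContDiffOn ℝ 2 (fun w => U w t) (Ioi 0) := contDiffOn_slice_left hU t
  have hUz' (t : ℝ) : ContDiffOn ℝ 1 (deriv fun w => U w t) (Ioi 0) :=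
    (hUz t).deriv_of_isOpen isOpen_Ioi one_add_one_eq_two.le
  refine ⟨fun t => (hUz t).differentiableOn two_ne_zero,
    fun t => (hUz' t).differentiableOn one_ne_zero, fun z hz => ?_⟩
  have hUt : ContDiffOn ℝ 2 (U z) univ := (contDiffOn_slice_right hU z).mono fun _ _ => hz
  exact (contDiffOn_univ.1 hUt).differentiable two_ne_zero

/-- The left-hand side of the convertible bond equation for the price `V S p t` as a function of
the stock price `S`, the bond price `p` and time, with volatilities `σS` and `σp`. The coefficients
may vary in time, and the short rate `r S p t` may also depend on the stock. -/
noncomputable def convertibleBondOperator (σS ρ σp : ℝ → ℝ) (r V : ℝ → ℝ → ℝ → ℝ)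
    (S p t : ℝ) : ℝ :=
  deriv (fun τ => V S p τ) t
    + (1 / 2) * (σS t ^ 2 * S ^ 2 * deriv (deriv fun s => V s p t) S
        - 2 * ρ t * σS t * σp t * S * p * deriv (fun s => deriv (fun q => V s q t) p) S
        + σp t ^ 2 * p ^ 2 * deriv (deriv fun q => V S q t) p)
    + r S p t * S * deriv (fun s => V s p t) S
    + r S p t * p * deriv (fun q => V S q t) p
    - r S p t * V S p t

/-- The left-hand side of the equation for the price `U z t` in units of the bond, as a function of
the stock price `z` in the same units and time. -/
noncomputable def reducedBondOperator (σS ρ σp : ℝ → ℝ) (U : ℝ → ℝ → ℝ) (z t : ℝ) : ℝ :=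
  deriv (fun τ => U z τ) t
    + (1 / 2) * (σS t ^ 2 + 2 * ρ t * σS t * σp t + σp t ^ 2) * z ^ 2
      * deriv (deriv fun w => U w t) z

theorem convertibleBondOperator_perspective (σS ρ σp : ℝ → ℝ) (r : ℝ → ℝ → ℝ → ℝ)
    {U : ℝ → ℝ → ℝ} {S p t : ℝ} (hp : p ≠ 0)
    (hU : ∀ᶠ z in 𝓝 (S / p), DifferentiableAt ℝ (fun w => U w t) z)
    (hU' : DifferentiableAt ℝ (deriv fun w => U w t) (S / p))
    (hUt : DifferentiableAt ℝ (U (S / p)) t) :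
    convertibleBondOperator σS ρ σp r (fun s q τ => perspective (fun w => U w τ) s q) S p t =
      perspective (fun z => reducedBondOperator σS ρ σp U z t) S p := by
  have time_deriv : deriv (fun τ => perspective (fun w => U w τ) S p) t =
      p * deriv (fun τ => U (S / p) τ) t := deriv_const_mul p hUt
  have euler := euler_identity_perspective hp hU.self_of_nhds
  simp only [convertibleBondOperator]
  rw [time_deriv, deriv_deriv_perspective_left hp hU hU', deriv_deriv_perspective_mixed hp hU hU',
    deriv_deriv_perspective_right hp hU hU', ← euler, perspective, reducedBondOperator]
  field_simp
  ring

theorem convertible_bond_dimension_reduction_general (σS ρ σp : ℝ → ℝ) (T₀ : ℝ)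
    (r : ℝ → ℝ → ℝ → ℝ) (U : ℝ → ℝ → ℝ)
    (hU : ∀ t, DifferentiableOn ℝ (fun w => U w t) (Ioi 0))
    (hU' : ∀ t, DifferentiableOn ℝ (deriv fun w => U w t) (Ioi 0))
    (hUt : ∀ z, 0 < z → Differentiable ℝ (U z)) :
    ((∀ S p t, 0 < S → 0 < p → convertibleBondOperator σS ρ σp r
        (fun s q τ => perspective (fun w => U w τ) s q) S p t = 0) ↔
      ∀ z t, 0 < z → reducedBondOperator σS ρ σp U z t = 0) ∧
    ((∀ S p, 0 < S → 0 < p → perspective (fun w => U w T₀) S p = max S p) ↔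
      ∀ z, 0 < z → U z T₀ = 1 + max (z - 1) 0) := by
  have operator_eq {S p : ℝ} (t : ℝ) (hS : 0 < S) (hp : 0 < p) :
      convertibleBondOperator σS ρ σp r (fun s q τ => perspective (fun w => U w τ) s q) S p t =
        perspective (fun z => reducedBondOperator σS ρ σp U z t) S p := by
    have hz : 0 < S / p := div_pos hS hp
    exact convertibleBondOperator_perspective σS ρ σp r hp.ne'
      ((hU t).eventually_differentiableAt (Ioi_mem_nhds hz))
      ((hU' t).differentiableAt (Ioi_mem_nhds hz)) (hUt _ hz t)
  constructor
  · calc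
      _ ↔ ∀ t S p, 0 < S → 0 < p →
            perspective (fun z => reducedBondOperator σS ρ σp U z t) S p = 0 :=
        ⟨fun h t S p hS hp => operator_eq t hS hp ▸ h S p t hS hp,
          fun h S p t hS hp => (operator_eq t hS hp).trans (h t S p hS hp)⟩
      _ ↔ ∀ t z, 0 < z → reducedBondOperator σS ρ σp U z t = 0 :=
        forall_congr' fun _ => forall_pos_perspective_eq_zero_iff
      _ ↔ _ := forall_comm
  · rw [← forall_pos_perspective_eq_iff]
    exact forall₄_congr fun S p _ hp => by rw [perspective_one_add_max_sub_one hp]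

/-- Convertible bond: dimension reduction for an arbitrary short-rate function.
With `V(S,p,t) = p · U(S/p,t)`, the two-dimensional pricing problem for `V` is
equivalent to the one-dimensional degenerate problem for `U`. -/
theorem convertible_bond_dimension_reduction (σS ρ T₀ : ℝ) (hσS : 0 < σS)
    (Sigp : ℝ → ℝ) (hSigp : Continuous Sigp)
    (r : ℝ → ℝ → ℝ)
    (U : ℝ → ℝ → ℝ)
    (hU : ContDiffOn ℝ 2 (fun q : ℝ × ℝ => U q.1 q.2) {q : ℝ × ℝ | 0 < q.1})
    (V : ℝ → ℝ → ℝ → ℝ)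
    (hV : ∀ S p t, V S p t = p * U (S / p) t) :
    ((∀ S p t : ℝ, 0 < S → 0 < p →
        deriv (fun τ => V S p τ) t
            + (1 / 2) * (σS ^ 2 * S ^ 2 * deriv (deriv (fun s => V s p t)) S
                - 2 * ρ * σS * Sigp t * S * p
                    * deriv (fun s => deriv (fun q => V s q t) p) S
                + (Sigp t) ^ 2 * p ^ 2 * deriv (deriv (fun q => V S q t)) p)
            + r t p * S * deriv (fun s => V s p t) S
            + r t p * p * deriv (fun q => V S q t) p
            - r t p * V S p t = 0) ↔
      (∀ z t : ℝ, 0 < z →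
        deriv (fun τ => U z τ) t
            + (1 / 2) * (σS ^ 2 + 2 * ρ * σS * Sigp t + (Sigp t) ^ 2) * z ^ 2
                * deriv (deriv (fun w => U w t)) z = 0))
    ∧
    ((∀ S p : ℝ, 0 < S → 0 < p → V S p T₀ = max S p) ↔
      (∀ z : ℝ, 0 < z → U z T₀ = 1 + max (z - 1) 0)) := by
  obtain rfl : V = fun S p t => perspective (fun w => U w t) S p := by ext; exact hV _ _ _
  obtain ⟨hUz, hUz', hUt⟩ := differentiable_slices_of_contDiffOn hU
  exact convertible_bond_dimension_reduction_general (fun _ => σS) (fun _ => ρ) Sigp T₀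
    (fun _ p t => r t p) U hUz hUz' hUt
end
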